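/- Let d ≥ 1, ν ∈ (0,2), γ ≤ 0. For a Borel probability measure π on the space of Borel probability measures on ℝ^d (with the topology of weak convergence) concentrated on absolutely continuous probability measures, set π^N = ∫ ρ^{⊗N} π(dρ) for N ≥ 1 and define the mean fractional Fisher information Ĩ_{ν,γ}(π) = limsup_{N→∞} I^N_{ν,γ}(π^N). Let κ ≥ 1 and assume ∫ (∫_{ℝ^d} ⟨v⟩^κ ρ(dv)) π(dρ) < ∞. Let f₀ be a probability measure on ℝ^d with finite κ-th moment, let r > 0, and let B = {ρ : W₁(ρ, f₀) < r}; assume 0 < π(B) < 1 and set F = π(B)^{−1} π restricted to B and G = π(B^c)^{−1} π restricted to B^c. Then for every θ ∈ (0,1): Ĩ_{ν,γ}(θF + (1−θ)G) = θ Ĩ_{ν,γ}(F) + (1−θ) Ĩ_{ν,γ}(G). -/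

import Mathlib

open MeasureTheory ENNReal

noncomputable section

/-- `ℝ^d` as a Euclidean space. -/
abbrev Euc (d : ℕ) := EuclideanSpace ℝ (Fin d)

/-- Japanese bracket `⟨x⟩ = √(1+|x|²)`. -/
def jap {d : ℕ} (x : Euc d) : ℝ := Real.sqrt (1 + ‖x‖^2)

/-- Fractional Sobolev seminorm squared `|f|²_{H^s(ℝ^d)}`, valued in `[0,∞]`. -/
def fracSobolevSq (d : ℕ) (s : ℝ) (f : Euc d → ℝ) : ℝ≥0∞ :=
  ∫⁻ x : Euc d, ∫⁻ y : Euc d, ENNReal.ofReal ((f x - f y)^2 / ‖x - y‖ ^ ((d : ℝ) + 2*s))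

/-- Weighted normalized fractional Fisher information `I^N_{ν,γ}`, valued in `[0,∞]`. -/
def fisherInfo (d N : ℕ) (ν γ : ℝ) (G : (Fin N → Euc d) → ℝ) : ℝ≥0∞ :=
  (N : ℝ≥0∞)⁻¹ * ∑ i : Fin N, ∫⁻ V : Fin N → Euc d, ∫⁻ w : Euc d,
    ENNReal.ofReal ((jap (V i) ^ (γ/2) * Real.sqrt (G V)
      - jap w ^ (γ/2) * Real.sqrt (G (Function.update V i w)))^2
      / ‖V i - w‖ ^ ((d : ℝ) + ν))

/-- A probability density: measurable, nonnegative, total mass one. -/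
def IsProbDensity {α : Type*} [MeasureSpace α] (f : α → ℝ) : Prop :=
  Measurable f ∧ (∀ x, 0 ≤ f x) ∧ ∫⁻ x, ENNReal.ofReal (f x) = 1

/-- A symmetric (exchangeable) probability density on `(ℝ^d)^N`. -/
def IsSymDensity (d N : ℕ) (F : (Fin N → Euc d) → ℝ) : Prop :=
  IsProbDensity F ∧ ∀ (σ : Equiv.Perm (Fin N)) (V : Fin N → Euc d), F (V ∘ σ) = F V

/-- Borel σ-algebra on the space of probability measures with its weak topology. -/
instance pmBorel {α : Type*} [MeasurableSpace α] [TopologicalSpace α]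
    [OpensMeasurableSpace α] : MeasurableSpace (ProbabilityMeasure α) := borel _

/-- Wasserstein-1 distance via Kantorovich–Rubinstein duality. -/
def W1 {d : ℕ} (f g : Measure (Euc d)) : ℝ :=
  sSup {t : ℝ | ∃ φ : Euc d → ℝ, LipschitzWith 1 φ ∧
    t = (∫ x, φ x ∂f) - ∫ x, φ x ∂g}

/-- The mixture `π^N = ∫ ρ^{⊗N} π(dρ)`. -/
def mixture (d : ℕ) (π : Measure (ProbabilityMeasure (Euc d))) (N : ℕ) :
    Measure (Fin N → Euc d) :=
  π.bind (fun ρ => Measure.pi (fun _ : Fin N => (ρ : Measure (Euc d))))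

/-- Fisher information of a measure, computed through its Lebesgue density. -/
def fisherInfoM (d N : ℕ) (ν γ : ℝ) (μ : Measure (Fin N → Euc d)) : ℝ≥0∞ :=
  fisherInfo d N ν γ (fun V => (μ.rnDeriv volume V).toReal)

/-- The mean fractional Fisher information `Ĩ_{ν,γ}(π) = limsup_N I^N_{ν,γ}(π^N)`. -/
def meanFisher (d : ℕ) (ν γ : ℝ) (π : Measure (ProbabilityMeasure (Euc d))) : ℝ≥0∞ :=
  Filter.limsup (fun N => fisherInfoM d N ν γ (mixture d π N)) Filter.atTop

/-!
By the reverse triangle inequality in `L²`, applied to square roots of densities, the Fisher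
information of a tagged particle can only decrease when another particle is integrated out. The same
computation gives more: integrating the other particle out over `S` and over `Sᶜ` separately splits
the mixing measure `μ` into `ρ(S) μ(dρ)` and `(1 - ρ(S)) μ(dρ)`, and the two energies with one
particle fewer add up to at most the original one. In the limit of infinitely many particles the
loss of a particle is invisible, so the limit energy is superadditive for this splitting. Splittings
with this property are closed under products, complements and pointwise limits; hence they contain
the indicators of all sets generated by the maps `ρ ↦ ρ(S)`, that is of all Borel sets of
probability measures, and then all measurable weights with values in `[0,1]`. As the limit energy is
also sublinear, it is additive.
-/

section HellingerSq

/-- The squared difference of square roots `(√A - √B)²` on `[0,∞]`, the integrand of the Fisher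
information of a density. The maximum of the two truncated differences is `|√A - √B|`. -/
def hellingerSq (A B : ℝ≥0∞) : ℝ≥0∞ :=
  max (A ^ (1 / 2 : ℝ) - B ^ (1 / 2 : ℝ)) (B ^ (1 / 2 : ℝ) - A ^ (1 / 2 : ℝ)) ^ (2 : ℝ)

lemma hellingerSq_le_iff {A B C : ℝ≥0∞} :
    hellingerSq A B ≤ C ↔ A ^ (1 / 2 : ℝ) ≤ C ^ (1 / 2 : ℝ) + B ^ (1 / 2 : ℝ) ∧
      B ^ (1 / 2 : ℝ) ≤ C ^ (1 / 2 : ℝ) + A ^ (1 / 2 : ℝ) := by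
  rw [hellingerSq, ← tsub_le_iff_right, ← tsub_le_iff_right, ← max_le_iff, one_div,
    ENNReal.le_rpow_inv_iff two_pos]

lemma measurable_hellingerSq : Measurable fun q : ℝ≥0∞ × ℝ≥0∞ => hellingerSq q.1 q.2 := by
  unfold hellingerSq
  fun_prop

lemma hellingerSq_mul_left {c : ℝ≥0∞} (hc : c ≠ ⊤) (A B : ℝ≥0∞) :
    hellingerSq (c * A) (c * B) = c * hellingerSq A B := by
  have hc' : c ^ (1 / 2 : ℝ) ≠ ⊤ := by simp [hc]
  have hmul (x : ℝ≥0∞) : (c * x) ^ (1 / 2 : ℝ) = c ^ (1 / 2 : ℝ) * x ^ (1 / 2 : ℝ) :=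
    ENNReal.mul_rpow_of_nonneg _ _ (by norm_num)
  simp only [hellingerSq, hmul, ← ENNReal.mul_sub fun _ _ => hc']
  rw [← (mul_right_mono : Monotone (c ^ (1 / 2 : ℝ) * ·)).map_max,
    ENNReal.mul_rpow_of_nonneg _ _ zero_le_two, ← ENNReal.rpow_mul]
  norm_num

lemma hellingerSq_ofReal {x y : ℝ} (hx : 0 ≤ x) (hy : 0 ≤ y) :
    hellingerSq (ENNReal.ofReal x) (ENNReal.ofReal y) = ENNReal.ofReal ((√x - √y) ^ 2) := by
  simp only [hellingerSq, ENNReal.ofReal_rpow_of_nonneg hx (by norm_num : (0 : ℝ) ≤ 1 / 2),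
    ENNReal.ofReal_rpow_of_nonneg hy (by norm_num : (0 : ℝ) ≤ 1 / 2), ← Real.sqrt_eq_rpow,
    ← ENNReal.ofReal_sub _ (Real.sqrt_nonneg _), ← ENNReal.ofReal_max]
  rw [← neg_sub √x √y, ← abs_eq_max_neg,
    ENNReal.ofReal_rpow_of_nonneg (abs_nonneg _) zero_le_two, Real.rpow_two, sq_abs]

/-- Reverse triangle inequality in `L²`. -/
lemma hellingerSq_lintegral_le {Y : Type*} [MeasurableSpace Y] {ν : Measure Y}
    {u w : Y → ℝ≥0∞} (hu : Measurable u) (hw : Measurable w) :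
    hellingerSq (∫⁻ y, u y ∂ν) (∫⁻ y, w y ∂ν) ≤ ∫⁻ y, hellingerSq (u y) (w y) ∂ν := by
  have hH : Measurable fun y => hellingerSq (u y) (w y) :=
    measurable_hellingerSq.comp (hu.prodMk hw)
  have minkowski {f g : Y → ℝ≥0∞} (hg : Measurable g)
      (hfg : ∀ y, f y ^ (1 / 2 : ℝ) ≤
        hellingerSq (u y) (w y) ^ (1 / 2 : ℝ) + g y ^ (1 / 2 : ℝ)) :
      (∫⁻ y, f y ∂ν) ^ (1 / 2 : ℝ) ≤
        (∫⁻ y, hellingerSq (u y) (w y) ∂ν) ^ (1 / 2 : ℝ) + (∫⁻ y, g y ∂ν) ^ (1 / 2 : ℝ) := by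
    have sqrt_rpow_two (x : ℝ≥0∞) : (x ^ (1 / 2 : ℝ)) ^ (2 : ℝ) = x := by
      rw [← ENNReal.rpow_mul]; norm_num
    calc (∫⁻ y, f y ∂ν) ^ (1 / 2 : ℝ)
        ≤ (∫⁻ y, (hellingerSq (u y) (w y) ^ (1 / 2 : ℝ) + g y ^ (1 / 2 : ℝ)) ^ (2 : ℝ) ∂ν)
            ^ (1 / 2 : ℝ) := by
          gcongr with y
          rw [← sqrt_rpow_two (f y)]
          gcongr
          exact hfg y
      _ ≤ _ := by
          simpa only [Pi.add_apply, sqrt_rpow_two] using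
            lintegral_Lp_add_le (μ := ν) (hH.pow_const (1 / 2 : ℝ)).aemeasurable
              (hg.pow_const (1 / 2 : ℝ)).aemeasurable one_le_two
  exact hellingerSq_le_iff.2 ⟨minkowski hw fun y => (hellingerSq_le_iff.1 le_rfl).1,
    minkowski hu fun y => (hellingerSq_le_iff.1 le_rfl).2⟩

lemma hellingerSq_add_le (A₁ A₂ B₁ B₂ : ℝ≥0∞) :
    hellingerSq (A₁ + A₂) (B₁ + B₂) ≤ hellingerSq A₁ B₁ + hellingerSq A₂ B₂ := by
  simpa [lintegral_count, tsum_fintype, add_comm] using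
    hellingerSq_lintegral_le (ν := Measure.count)
      (measurable_of_countable (Bool.rec A₁ A₂)) (measurable_of_countable (Bool.rec B₁ B₂))

lemma tendsto_hellingerSq {ι : Type*} {l : Filter ι} {u w : ι → ℝ≥0∞} {A B : ℝ≥0∞}
    (hA : A ≠ ⊤) (hB : B ≠ ⊤) (hu : Filter.Tendsto u l (nhds A))
    (hw : Filter.Tendsto w l (nhds B)) :
    Filter.Tendsto (fun i => hellingerSq (u i) (w i)) l (nhds (hellingerSq A B)) := by
  have hu' := hu.ennrpow_const (1 / 2)
  have hw' := hw.ennrpow_const (1 / 2)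
  have hA' : A ^ (1 / 2 : ℝ) ≠ ⊤ := by simp [hA]
  have hB' : B ^ (1 / 2 : ℝ) ≠ ⊤ := by simp [hB]
  exact ((ENNReal.Tendsto.sub hu' hw' (.inl hA')).max
    (ENNReal.Tendsto.sub hw' hu' (.inl hB'))).ennrpow_const 2

end HellingerSq

section TwoPointEnergy

variable {E X Y : Type*} [MeasurableSpace E] [MeasurableSpace X] [MeasurableSpace Y]

/-- The Dirichlet-type energy `∬ (√g(v,x) - √g(w,x))² k(dv,dw) τ(dx)` of a density `g` in its first
variable, `k` being the interaction kernel seen as a measure. -/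
def twoPointEnergy (k : Measure (E × E)) (τ : Measure X) (g : E × X → ℝ≥0∞) : ℝ≥0∞ :=
  ∫⁻ q, hellingerSq (g (q.1.1, q.2)) (g (q.1.2, q.2)) ∂k.prod τ

variable {k : Measure (E × E)} {τ : Measure X}

lemma measurable_twoPointEnergy_integrand {g : E × X → ℝ≥0∞} (hg : Measurable g) :
    Measurable fun q : (E × E) × X => hellingerSq (g (q.1.1, q.2)) (g (q.1.2, q.2)) :=
  measurable_hellingerSq.comp <|
    (hg.comp (f := fun q : (E × E) × X => (q.1.1, q.2)) (by fun_prop)).prodMk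
      (hg.comp (f := fun q : (E × E) × X => (q.1.2, q.2)) (by fun_prop))

lemma twoPointEnergy_add_le {g h : E × X → ℝ≥0∞} (hg : Measurable g) :
    twoPointEnergy k τ (g + h) ≤ twoPointEnergy k τ g + twoPointEnergy k τ h := by
  simp only [twoPointEnergy, ← lintegral_add_left (measurable_twoPointEnergy_integrand hg)]
  exact lintegral_mono fun q => hellingerSq_add_le _ _ _ _

lemma twoPointEnergy_smul {c : ℝ≥0∞} (hc : c ≠ ⊤) (g : E × X → ℝ≥0∞) :
    twoPointEnergy k τ (c • g) = c * twoPointEnergy k τ g := by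
  simp only [twoPointEnergy, Pi.smul_apply, smul_eq_mul, hellingerSq_mul_left hc,
    lintegral_const_mul' _ _ hc]

lemma twoPointEnergy_comp [SFinite k] {σ : Measure Y} [SFinite σ] {e : Y → X}
    (he : MeasurePreserving e σ τ) {g : E × X → ℝ≥0∞} (hg : Measurable g) :
    twoPointEnergy k σ (fun z => g (z.1, e z.2)) = twoPointEnergy k τ g :=
  ((MeasurePreserving.id k).prod he).lintegral_comp (measurable_twoPointEnergy_integrand hg)

lemma twoPointEnergy_lintegral_le [SFinite τ] {lam : Measure Y} [SFinite lam]
    {h : E × (Y × X) → ℝ≥0∞} (hh : Measurable h) :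
    twoPointEnergy k τ (fun z => ∫⁻ y, h (z.1, (y, z.2)) ∂lam) ≤
      twoPointEnergy k (lam.prod τ) h := by
  have hH := measurable_twoPointEnergy_integrand hh
  calc twoPointEnergy k τ (fun z => ∫⁻ y, h (z.1, (y, z.2)) ∂lam)
      ≤ ∫⁻ q : (E × E) × X, ∫⁻ y,
          hellingerSq (h (q.1.1, (y, q.2))) (h (q.1.2, (y, q.2))) ∂lam ∂k.prod τ :=
        lintegral_mono fun q => hellingerSq_lintegral_le (by fun_prop) (by fun_prop)
    _ = ∫⁻ e, ∫⁻ x, ∫⁻ y, hellingerSq (h (e.1, (y, x))) (h (e.2, (y, x))) ∂lam ∂τ ∂k :=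
        lintegral_prod _ (hH.comp (f := fun r : ((E × E) × X) × Y => (r.1.1, (r.2, r.1.2)))
          (by fun_prop)).lintegral_prod_right'.aemeasurable
    _ = twoPointEnergy k (lam.prod τ) h := by
        rw [twoPointEnergy, lintegral_prod _ hH.aemeasurable]
        exact lintegral_congr fun e =>
          (lintegral_prod_symm _ (hH.comp measurable_prodMk_left).aemeasurable).symm

lemma twoPointEnergy_setLIntegral_add_compl_le [SFinite k] [SFinite τ] {lam : Measure Y}
    [SFinite lam] {h : E × (Y × X) → ℝ≥0∞} (hh : Measurable h) {S : Set Y}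
    (hS : MeasurableSet S) :
    twoPointEnergy k τ (fun z => ∫⁻ y in S, h (z.1, (y, z.2)) ∂lam) +
      twoPointEnergy k τ (fun z => ∫⁻ y in Sᶜ, h (z.1, (y, z.2)) ∂lam) ≤
        twoPointEnergy k (lam.prod τ) h := by
  refine (add_le_add (twoPointEnergy_lintegral_le hh) (twoPointEnergy_lintegral_le hh)).trans_eq ?_
  rw [twoPointEnergy, twoPointEnergy, ← lintegral_add_measure, ← Measure.prod_add,
    ← Measure.add_prod, Measure.restrict_add_restrict_compl hS, twoPointEnergy]

lemma twoPointEnergy_withDensity_prod [SFinite τ] {m : Measure E} [SFinite m]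
    {K : E × E → ℝ≥0∞} (hK : Measurable K) {g : E × X → ℝ≥0∞} (hg : Measurable g) :
    twoPointEnergy ((m.prod m).withDensity K) τ g =
      ∫⁻ z, ∫⁻ w, K (z.1, w) * hellingerSq (g z) (g (w, z.2)) ∂m ∂m.prod τ := by
  have hH := measurable_twoPointEnergy_integrand hg
  have hKH : Measurable fun q : (E × X) × E =>
      K (q.1.1, q.2) * hellingerSq (g q.1) (g (q.2, q.1.2)) :=
    (hK.comp (f := fun q : (E × X) × E => (q.1.1, q.2)) (by fun_prop)).mul
      (hH.comp (f := fun q : (E × X) × E => ((q.1.1, q.2), q.1.2)) (by fun_prop))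
  rw [twoPointEnergy, lintegral_prod_symm _ hH.aemeasurable,
    lintegral_prod_symm _ hKH.lintegral_prod_right'.aemeasurable]
  refine lintegral_congr fun x => ?_
  have hHx : Measurable fun e : E × E => hellingerSq (g (e.1, x)) (g (e.2, x)) :=
    hH.comp measurable_prodMk_right
  rw [lintegral_withDensity_eq_lintegral_mul _ hK hHx,
    lintegral_prod _ (hK.mul hHx).aemeasurable]
  rfl

lemma ae_prod_of_absolutelyContinuous [SFinite k] [SFinite τ] {m : Measure E}
    (hk : k ≪ m.prod m) {P : E × X → Prop} (hP : ∀ᵐ z ∂m.prod τ, P z) :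
    ∀ᵐ q ∂k.prod τ, P (q.1.1, q.2) ∧ P (q.1.2, q.2) :=
  ((QuasiMeasurePreserving.prodMap
      (Measure.quasiMeasurePreserving_fst.mono_left hk) (.id τ)).ae hP).and
    ((QuasiMeasurePreserving.prodMap
      (Measure.quasiMeasurePreserving_snd.mono_left hk) (.id τ)).ae hP)

lemma twoPointEnergy_congr_ae [SFinite k] [SFinite τ] {m : Measure E}
    (hk : k ≪ m.prod m) {g h : E × X → ℝ≥0∞} (hgh : g =ᵐ[m.prod τ] h) :
    twoPointEnergy k τ g = twoPointEnergy k τ h := by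
  refine lintegral_congr_ae ?_
  filter_upwards [ae_prod_of_absolutelyContinuous hk hgh] with q hq
  rw [hq.1, hq.2]

lemma twoPointEnergy_le_liminf [SFinite k] [SFinite τ] {m : Measure E}
    (hk : k ≪ m.prod m) {g : E × X → ℝ≥0∞} {u : ℕ → E × X → ℝ≥0∞}
    (hu : ∀ n, Measurable (u n)) (hfin : ∀ᵐ z ∂m.prod τ, g z ≠ ⊤)
    (hlim : ∀ᵐ z ∂m.prod τ, Filter.Tendsto (fun n => u n z) Filter.atTop (nhds (g z))) :
    twoPointEnergy k τ g ≤ Filter.liminf (fun n => twoPointEnergy k τ (u n)) Filter.atTop :=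
  calc twoPointEnergy k τ g
      = ∫⁻ q, Filter.liminf (fun n => hellingerSq (u n (q.1.1, q.2)) (u n (q.1.2, q.2)))
          Filter.atTop ∂k.prod τ := by
        refine lintegral_congr_ae ?_
        filter_upwards [ae_prod_of_absolutelyContinuous hk (hfin.and hlim)] with q ⟨h₁, h₂⟩
        exact (tendsto_hellingerSq h₁.1 h₂.1 h₁.2 h₂.2).liminf_eq.symm
    _ ≤ _ := lintegral_liminf_le fun n => measurable_twoPointEnergy_integrand (hu n)

end TwoPointEnergy

section Threshold

variable {x c : ℝ}

lemma tendsto_one_sub_pow_ceil_of_le (hc : 0 < c) (hcx : c ≤ x) (hx : x ≤ 1) :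
    Filter.Tendsto (fun n : ℕ => (1 - x ^ n) ^ ⌈n * c⁻¹ ^ n⌉₊) Filter.atTop (nhds 0) := by
  have hx₀ : 0 ≤ x := hc.le.trans hcx
  have hbase (n : ℕ) : 0 ≤ 1 - x ^ n := sub_nonneg.2 (pow_le_one₀ hx₀ hx)
  have hn (n : ℕ) : (n : ℝ) ≤ ⌈n * c⁻¹ ^ n⌉₊ * x ^ n :=
    calc (n : ℝ) = n * c⁻¹ ^ n * c ^ n := by
          rw [mul_assoc, ← mul_pow, inv_mul_cancel₀ hc.ne', one_pow, mul_one]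
      _ ≤ ⌈n * c⁻¹ ^ n⌉₊ * x ^ n := by
          gcongr
          exact Nat.le_ceil _
  refine squeeze_zero (fun n => pow_nonneg (hbase n) _) (fun n => ?_)
    (Real.tendsto_exp_neg_atTop_nhds_zero.comp tendsto_natCast_atTop_atTop)
  calc (1 - x ^ n) ^ ⌈n * c⁻¹ ^ n⌉₊
      ≤ Real.exp (-x ^ n) ^ ⌈n * c⁻¹ ^ n⌉₊ :=
        pow_le_pow_left₀ (hbase n) (Real.one_sub_le_exp_neg _) _
    _ = Real.exp (-(⌈n * c⁻¹ ^ n⌉₊ * x ^ n)) := by rw [← Real.exp_nat_mul, mul_neg]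
    _ ≤ Real.exp (-n) := Real.exp_le_exp.2 (neg_le_neg (hn n))

lemma tendsto_one_sub_pow_ceil_of_lt (hx : 0 ≤ x) (hxc : x < c) (hc : c ≤ 1) :
    Filter.Tendsto (fun n : ℕ => (1 - x ^ n) ^ ⌈n * c⁻¹ ^ n⌉₊) Filter.atTop (nhds 1) := by
  have hc₀ : 0 < c := hx.trans_lt hxc
  have hpow (n : ℕ) : x ^ n ≤ 1 := pow_le_one₀ hx (hxc.le.trans hc)
  have hlower (n : ℕ) :
      1 - (n * (x / c) ^ n + x ^ n) ≤ (1 - x ^ n) ^ ⌈n * c⁻¹ ^ n⌉₊ := by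
    have hceil : (⌈n * c⁻¹ ^ n⌉₊ : ℝ) * x ^ n ≤ (n * c⁻¹ ^ n + 1) * x ^ n := by
      gcongr
      exact (Nat.ceil_lt_add_one (by positivity)).le
    calc 1 - (n * (x / c) ^ n + x ^ n) = 1 - (n * c⁻¹ ^ n + 1) * x ^ n := by
          rw [div_eq_mul_inv, mul_pow]; ring
      _ ≤ 1 + ⌈n * c⁻¹ ^ n⌉₊ * (-x ^ n) := by linarith
      _ ≤ (1 + -x ^ n) ^ ⌈n * c⁻¹ ^ n⌉₊ := one_add_mul_le_pow (by linarith [hpow n]) _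
  have hlim : Filter.Tendsto (fun n : ℕ => 1 - (n * (x / c) ^ n + x ^ n)) Filter.atTop
      (nhds 1) := by
    simpa only [add_zero, sub_zero] using
      ((tendsto_self_mul_const_pow_of_lt_one (by positivity) ((div_lt_one hc₀).2 hxc)).add
        (tendsto_pow_atTop_nhds_zero_of_lt_one hx (hxc.trans_le hc))).const_sub 1
  exact tendsto_of_tendsto_of_tendsto_of_le_of_le hlim tendsto_const_nhds hlower fun n =>
    pow_le_one₀ (sub_nonneg.2 (hpow n)) (sub_le_self _ (pow_nonneg hx n))

/-- Turns products and complements of a `[0,1]`-valued function into the indicator of its sublevel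
set: the exponent makes the mean number `⌈n c⁻ⁿ⌉ xⁿ` of events of probability `xⁿ` tend to `0` for
`x < c` and to `∞` for `x ≥ c`. -/
lemma tendsto_one_sub_pow_ceil_ennreal {x c : ℝ≥0∞} (hx : x ≤ 1) (hc₀ : c ≠ 0) (hc : c ≤ 1) :
    Filter.Tendsto (fun n : ℕ => (1 - x ^ n) ^ ⌈n * c.toReal⁻¹ ^ n⌉₊) Filter.atTop
      (nhds ({y | y < c}.indicator 1 x)) := by
  lift x to NNReal using ne_top_of_le_ne_top one_ne_top hx
  lift c to NNReal using ne_top_of_le_ne_top one_ne_top hc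
  have hx' : x ≤ 1 := mod_cast hx
  have hcoe (k n : ℕ) : (((1 - x ^ n) ^ k : NNReal) : ℝ) = (1 - (x : ℝ) ^ n) ^ k := by
    rw [NNReal.coe_pow, NNReal.coe_sub (pow_le_one' hx' n), NNReal.coe_one, NNReal.coe_pow]
  suffices Filter.Tendsto (fun n : ℕ => (1 - x ^ n) ^ ⌈n * (c : ℝ)⁻¹ ^ n⌉₊) Filter.atTop
      (nhds ({y | y < c}.indicator 1 x)) by
    have := ENNReal.tendsto_coe.2 this
    simpa [Set.indicator_apply, apply_ite] using this
  rw [← NNReal.tendsto_coe]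
  simp only [hcoe]
  by_cases hxc : x < c
  · simpa [hxc] using tendsto_one_sub_pow_ceil_of_lt x.2 hxc (mod_cast hc)
  · simpa [hxc] using tendsto_one_sub_pow_ceil_of_le
      (NNReal.coe_pos.2 <| pos_iff_ne_zero.2 (mod_cast hc₀)) (not_lt.1 hxc) hx'

end Threshold

section Splitting

variable {Ω : Type*} [MeasurableSpace Ω] {π : Measure Ω} {J : Measure Ω → ℝ≥0∞}

/-- Sublinear functionals of finite measures which are lower semicontinuous along bounded pointwise
convergence of densities; `π` is a reference measure. -/
structure IsLSCSublinear (π : Measure Ω) (J : Measure Ω → ℝ≥0∞) : Prop where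
  add_le : ∀ (μ ν : Measure Ω) [IsFiniteMeasure μ] [IsFiniteMeasure ν], J (μ + ν) ≤ J μ + J ν
  smul : ∀ (c : ℝ≥0∞), c ≠ ⊤ → ∀ μ : Measure Ω, J (c • μ) = c * J μ
  withDensity_le_liminf : ∀ (μ : Measure Ω) [IsFiniteMeasure μ], μ ≪ π →
    ∀ (u : ℕ → Ω → ℝ≥0∞) (χ : Ω → ℝ≥0∞), (∀ n, Measurable (u n)) → (∀ n ω, u n ω ≤ 1) →
      (∀ ω, Filter.Tendsto (fun n => u n ω) Filter.atTop (nhds (χ ω))) →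
        J (μ.withDensity χ) ≤ Filter.liminf (fun n => J (μ.withDensity (u n))) Filter.atTop

/-- `χ : Ω → [0,1]` splits `J` when cutting any finite measure `μ ≪ π` into the two pieces `χ μ`
and `(1 - χ) μ` does not increase the total value of `J`. -/
structure Splits (J : Measure Ω → ℝ≥0∞) (π : Measure Ω) (χ : Ω → ℝ≥0∞) : Prop where
  measurable : Measurable χ
  le_one : ∀ ω, χ ω ≤ 1
  add_le : ∀ (μ : Measure Ω) [IsFiniteMeasure μ], μ ≪ π →
    J (μ.withDensity χ) + J (μ.withDensity (1 - χ)) ≤ J μ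

lemma isFiniteMeasure_withDensity_of_le_one (μ : Measure Ω) [IsFiniteMeasure μ] {f : Ω → ℝ≥0∞}
    (hf : ∀ ω, f ω ≤ 1) : IsFiniteMeasure (μ.withDensity f) :=
  isFiniteMeasure_of_le μ <| (withDensity_mono (.of_forall hf)).trans_eq withDensity_one

lemma liminf_add_liminf_le_of_forall_add_le {u v : ℕ → ℝ≥0∞} {C : ℝ≥0∞}
    (h : ∀ n, u n + v n ≤ C) :
    Filter.liminf u Filter.atTop + Filter.liminf v Filter.atTop ≤ C := by
  rw [Filter.liminf_eq_iSup_iInf_of_nat, Filter.liminf_eq_iSup_iInf_of_nat]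
  exact ENNReal.iSup_add_iSup_le fun i j => (add_le_add (iInf₂_le _ (le_max_left i j))
    (iInf₂_le _ (le_max_right i j))).trans (h (max i j))

namespace Splits

variable {χ χ' : Ω → ℝ≥0∞}

lemma one_sub_one_sub (h : Splits J π χ) : 1 - (1 - χ) = χ :=
  funext fun ω => ENNReal.sub_sub_cancel one_ne_top (h.le_one ω)

lemma compl (h : Splits J π χ) : Splits J π (1 - χ) where
  measurable := measurable_one.sub h.measurable
  le_one _ := tsub_le_self
  add_le μ _ hμ := by simpa only [h.one_sub_one_sub, add_comm] using h.add_le μ hμ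

lemma of_tendsto (hJ : IsLSCSublinear π J) {u : ℕ → Ω → ℝ≥0∞} (hu : ∀ n, Splits J π (u n))
    (hlim : ∀ ω, Filter.Tendsto (fun n => u n ω) Filter.atTop (nhds (χ ω))) : Splits J π χ where
  measurable := measurable_of_tendsto_metrizable (fun n => (hu n).measurable)
    (tendsto_pi_nhds.2 hlim)
  le_one ω := le_of_tendsto' (hlim ω) fun n => (hu n).le_one ω
  add_le μ _ hμ :=
    (add_le_add
      (hJ.withDensity_le_liminf μ hμ u χ (fun n => (hu n).measurable) (fun n => (hu n).le_one) hlim)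
      (hJ.withDensity_le_liminf μ hμ (fun n => 1 - u n) (1 - χ)
        (fun n => (hu n).compl.measurable) (fun n => (hu n).compl.le_one)
        fun ω => ((ENNReal.continuous_sub_left one_ne_top).tendsto (χ ω)).comp (hlim ω))).trans
      (liminf_add_liminf_le_of_forall_add_le fun n => (hu n).add_le μ hμ)

lemma mul (hJ : IsLSCSublinear π J) (h : Splits J π χ) (h' : Splits J π χ') :
    Splits J π (χ * χ') where
  measurable := h.measurable.mul h'.measurable
  le_one ω := mul_le_one' (h.le_one ω) (h'.le_one ω)
  add_le μ _ hμ := by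
    have := isFiniteMeasure_withDensity_of_le_one μ h.le_one
    have := isFiniteMeasure_withDensity_of_le_one μ h.compl.le_one
    have := isFiniteMeasure_withDensity_of_le_one (μ.withDensity χ) h'.compl.le_one
    have hsplit : μ.withDensity (1 - χ * χ') =
        (μ.withDensity χ).withDensity (1 - χ') + μ.withDensity (1 - χ) := by
      rw [← withDensity_mul _ h.measurable h'.compl.measurable,
        ← withDensity_add_right _ h.compl.measurable]
      congr 1
      ext ω
      have hχ : χ ω ≠ ⊤ := ne_top_of_le_ne_top one_ne_top (h.le_one ω)
      simp only [Pi.sub_apply, Pi.mul_apply, Pi.add_apply, Pi.one_apply]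
      rw [ENNReal.mul_sub fun _ _ => hχ, mul_one, add_comm,
        tsub_add_tsub_cancel (h.le_one ω) (mul_le_of_le_one_right' (h'.le_one ω))]
    calc J (μ.withDensity (χ * χ')) + J (μ.withDensity (1 - χ * χ'))
        ≤ J ((μ.withDensity χ).withDensity χ') +
            (J ((μ.withDensity χ).withDensity (1 - χ')) + J (μ.withDensity (1 - χ))) := by
          rw [hsplit, withDensity_mul _ h.measurable h'.measurable]
          gcongr
          exact hJ.add_le _ _
      _ ≤ J (μ.withDensity χ) + J (μ.withDensity (1 - χ)) := by
          rw [← add_assoc]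
          gcongr
          exact h'.add_le _ ((withDensity_absolutelyContinuous _ _).trans hμ)
      _ ≤ J μ := h.add_le μ hμ

lemma const (hJ : IsLSCSublinear π J) {c : ℝ≥0∞} (hc : c ≤ 1) : Splits J π fun _ => c where
  measurable := measurable_const
  le_one _ := hc
  add_le μ _ _ := by
    have hc' : (1 : Ω → ℝ≥0∞) - (fun _ => c) = fun _ => 1 - c := rfl
    rw [hc', withDensity_const, withDensity_const, hJ.smul c (ne_top_of_le_ne_top one_ne_top hc),
      hJ.smul (1 - c) (by simp), ← add_mul, add_tsub_cancel_of_le hc, one_mul]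

lemma one (hJ : IsLSCSublinear π J) : Splits J π 1 := const hJ le_rfl

lemma pow (hJ : IsLSCSublinear π J) (h : Splits J π χ) : ∀ n : ℕ, Splits J π (χ ^ n)
  | 0 => by simpa only [pow_zero] using one hJ
  | n + 1 => by simpa only [pow_succ] using (pow hJ h n).mul hJ h

lemma prod_range (hJ : IsLSCSublinear π J) {u : ℕ → Ω → ℝ≥0∞} (hu : ∀ n, Splits J π (u n)) :
    ∀ n : ℕ, Splits J π (∏ i ∈ Finset.range n, u i)
  | 0 => by simpa only [Finset.prod_range_zero] using one hJ
  | n + 1 => by simpa only [Finset.prod_range_succ] using (prod_range hJ hu n).mul hJ (hu n)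

lemma indicator_lt (hJ : IsLSCSublinear π J) (h : Splits J π χ) (c : ℝ≥0∞) :
    Splits J π ({ω | χ ω < c}.indicator 1) := by
  rcases eq_or_ne c 0 with rfl | hc₀
  · simpa using const hJ zero_le_one
  rcases lt_or_ge 1 c with hc | hc
  · simpa [fun ω => (h.le_one ω).trans_lt hc] using one hJ
  · exact of_tendsto hJ (fun n => (h.pow hJ n).compl.pow hJ ⌈n * c.toReal⁻¹ ^ n⌉₊) fun ω =>
      tendsto_one_sub_pow_ceil_ennreal (h.le_one ω) hc₀ hc

lemma indicator_compl {A : Set Ω} (h : Splits J π (A.indicator 1)) :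
    Splits J π (Aᶜ.indicator 1) := by
  have heq : (Aᶜ.indicator 1 : Ω → ℝ≥0∞) = 1 - A.indicator 1 := by
    ext ω
    by_cases hω : ω ∈ A <;> simp [hω]
  exact heq ▸ h.compl

lemma indicator_iInter (hJ : IsLSCSublinear π J) {A : ℕ → Set Ω}
    (hA : ∀ n, Splits J π ((A n).indicator 1)) : Splits J π ((⋂ n, A n).indicator 1) := by
  refine of_tendsto hJ (prod_range hJ hA) fun ω => ?_
  simp only [Finset.prod_apply]
  by_cases hω : ω ∈ ⋂ n, A n
  · rw [Set.mem_iInter] at hω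
    simp [hω]
  · obtain ⟨n, hn⟩ : ∃ n, ω ∉ A n := by simpa using hω
    rw [Set.indicator_of_notMem hω]
    refine tendsto_const_nhds.congr' ?_
    filter_upwards [Filter.eventually_gt_atTop n] with N hN
    exact (Finset.prod_eq_zero (Finset.mem_range.2 hN) (Set.indicator_of_notMem hn 1)).symm

/-- The σ-algebra of the sets whose indicator splits `J`. -/
abbrev measurableSpace (hJ : IsLSCSublinear π J) : MeasurableSpace Ω where
  MeasurableSet' A := Splits J π (A.indicator 1)
  measurableSet_empty := by simpa using const hJ zero_le_one
  measurableSet_compl _ h := h.indicator_compl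
  measurableSet_iUnion A hA := by
    simpa only [Set.compl_iInter, compl_compl] using
      (indicator_iInter hJ fun n => (hA n).indicator_compl).indicator_compl

lemma indicator_of_le_comap {E : Type*} [MeasurableSpace E] (hJ : IsLSCSublinear π J)
    {R : Ω → Measure E} (hR : ∀ S, MeasurableSet S → Splits J π fun ω => R ω S)
    (hΩ : ‹MeasurableSpace Ω› ≤ Measure.instMeasurableSpace.comap R) {A : Set Ω}
    (hA : MeasurableSet A) : Splits J π (A.indicator 1) := by
  have hRm : Measurable[measurableSpace hJ] R :=
    @Measure.measurable_of_measurable_coe _ _ _ (measurableSpace hJ) R fun S hS =>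
      @measurable_of_Iio _ _ _ _ _ (_) _ _ _ _ fun c => (hR S hS).indicator_lt hJ c
  exact measurable_iff_comap_le.1 hRm A (hΩ A hA)

lemma of_measurable (hJ : IsLSCSublinear π J)
    (hind : ∀ A, MeasurableSet A → Splits J π (A.indicator 1)) (hχ : Measurable χ)
    (hχ₁ : ∀ ω, χ ω ≤ 1) : Splits J π χ := by
  refine Measurable.ennreal_induction (motive := fun χ => (∀ ω, χ ω ≤ 1) → Splits J π χ)
    (fun c A hA hle => ?_) (fun f g hfg _ _ ihf ihg hle => ?_) (fun u _ hmono ih hle => ?_) hχ hχ₁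
  · have heq : A.indicator (fun _ => c) = (fun _ => min c 1) * A.indicator 1 := by
      ext ω
      by_cases hω : ω ∈ A
      · simpa [hω] using hle ω
      · simp [hω]
    exact heq ▸ (const hJ (min_le_right _ _)).mul hJ (hind A hA)
  · have hf := ihf fun ω => le_self_add.trans (hle ω)
    have hg := ihg fun ω => le_add_self.trans (hle ω)
    have heq : f + g = 1 - (1 - f) * (1 - g) := by
      ext ω
      have hzero : f ω = 0 ∨ g ω = 0 := by
        by_contra! h
        exact Set.disjoint_left.1 hfg h.1 h.2
      have hsub {x : ℝ≥0∞} (hx : x ≤ 1) : 1 - (1 - x) = x :=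
        ENNReal.sub_sub_cancel one_ne_top hx
      rcases hzero with h | h
      · simp [h, hsub (hg.le_one ω)]
      · simp [h, hsub (hf.le_one ω)]
    exact heq ▸ (hf.compl.mul hJ hg.compl).compl
  · exact of_tendsto hJ (fun n => ih n fun ω => (le_iSup (fun i => u i ω) n).trans (hle ω))
      fun ω => tendsto_atTop_iSup fun i j hij => hmono hij ω

end Splits

lemma IsLSCSublinear.map_add (hJ : IsLSCSublinear π J)
    (hsplit : ∀ χ : Ω → ℝ≥0∞, Measurable χ → (∀ ω, χ ω ≤ 1) → Splits J π χ)
    {F G : Measure Ω} [IsFiniteMeasure F] [IsFiniteMeasure G] (hF : F ≪ π) (hG : G ≪ π) :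
    J (F + G) = J F + J G := by
  refine le_antisymm (hJ.add_le F G) ?_
  have hFle : F ≤ F + G := Measure.le_add_right le_rfl
  obtain ⟨χ, hχm, hχ₁, hFχ⟩ : ∃ χ : Ω → ℝ≥0∞, Measurable χ ∧ (∀ ω, χ ω ≤ 1) ∧
      (F + G).withDensity χ = F := by
    refine ⟨F.rnDeriv (F + G) ⊓ 1, (F.measurable_rnDeriv _).inf measurable_one,
      fun ω => inf_le_right, ?_⟩
    conv_rhs => rw [← Measure.withDensity_rnDeriv_eq F (F + G) hFle.absolutelyContinuous]
    refine withDensity_congr_ae ?_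
    filter_upwards [Measure.rnDeriv_le_one_of_le hFle] with ω hω
    exact inf_of_le_left hω
  have hGχ : (F + G).withDensity (1 - χ) = G := by
    have := isFiniteMeasure_withDensity_of_le_one (F + G) hχ₁
    rw [Measure.withDensity_sub measurable_one hχm, withDensity_one, hFχ, add_comm,
      Measure.add_sub_cancel]
  simpa only [hFχ, hGχ] using
    (hsplit χ hχm hχ₁).add_le (F + G) (Measure.AbsolutelyContinuous.add_left hF hG)

end Splitting

section ProductMeasure

variable {E : Type*} [MeasurableSpace E] {m : Measure E} [SigmaFinite m]

lemma lintegral_pi_fin_prod_eq_prod : ∀ {n : ℕ} {f : Fin n → E → ℝ≥0∞}, (∀ i, Measurable (f i)) →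
    ∫⁻ x, ∏ i, f i (x i) ∂Measure.pi (fun _ : Fin n => m) = ∏ i, ∫⁻ v, f i v ∂m
  | 0, f, _ => by simp
  | n + 1, f, hf => by
    rw [← (measurePreserving_piFinSuccAbove (fun _ : Fin (n + 1) => m) 0).symm.lintegral_comp_emb
      (MeasurableEquiv.measurableEmbedding _), Fin.prod_univ_succ,
      ← lintegral_pi_fin_prod_eq_prod fun i => hf i.succ,
      ← lintegral_prod_mul (hf 0).aemeasurable (Finset.measurable_prod _ fun i _ =>
        (hf i.succ).comp (measurable_pi_apply i)).aemeasurable]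
    simp [Fin.prod_univ_succ, MeasurableEquiv.piFinSuccAbove_symm_apply]

lemma pi_fin_withDensity {n : ℕ} {f : E → ℝ≥0∞} (hf : Measurable f)
    [SigmaFinite (m.withDensity f)] :
    Measure.pi (fun _ : Fin n => m.withDensity f) =
      (Measure.pi fun _ => m).withDensity fun x => ∏ i, f (x i) := by
  refine Measure.pi_eq fun s hs => ?_
  have hprod (x : Fin n → E) : (Set.univ.pi s).indicator (fun x => ∏ i, f (x i)) x =
      ∏ i, (s i).indicator f (x i) := by
    by_cases hx : ∀ i, x i ∈ s i
    · simp [hx]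
    · obtain ⟨i, hi⟩ := not_forall.1 hx
      rw [Set.indicator_of_notMem (mt (fun h => Set.mem_univ_pi.1 h) hx),
        Finset.prod_eq_zero (Finset.mem_univ i) (Set.indicator_of_notMem hi f)]
  rw [withDensity_apply _ (.univ_pi hs), ← lintegral_indicator (.univ_pi hs), lintegral_congr hprod,
    lintegral_pi_fin_prod_eq_prod fun i => hf.indicator (hs i)]
  exact Finset.prod_congr rfl fun i _ => by
    rw [withDensity_apply _ (hs i), lintegral_indicator (hs i)]

end ProductMeasure

section MixtureEnergy

variable {Ω E : Type*} [MeasurableSpace Ω] [MeasurableSpace E] {n : ℕ}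

/-- The joint density, at a tagged particle `z.1` and `n` further particles `z.2`, of the mixture
over `μ` of the product laws with one-particle densities `p ω`. -/
def taggedDensity (p : Ω → E → ℝ≥0∞) (μ : Measure Ω) (z : E × (Fin n → E)) : ℝ≥0∞ :=
  ∫⁻ ω, p ω z.1 * ∏ i, p ω (z.2 i) ∂μ

variable {p : Ω → E → ℝ≥0∞} {μ ν : Measure Ω}

lemma measurable_taggedDensity_integrand (hp : Measurable (Function.uncurry p)) :
    Measurable fun q : (E × (Fin n → E)) × Ω => p q.2 q.1.1 * ∏ i, p q.2 (q.1.2 i) := by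
  have hcomp {f : (E × (Fin n → E)) × Ω → E} (hf : Measurable f) :
      Measurable fun q => p q.2 (f q) := hp.comp (measurable_snd.prodMk hf)
  exact (hcomp (by fun_prop)).mul (Finset.measurable_prod _ fun i _ => hcomp (by fun_prop))

lemma measurable_taggedDensity [SFinite μ] (hp : Measurable (Function.uncurry p)) :
    Measurable (taggedDensity (n := n) p μ) :=
  (measurable_taggedDensity_integrand hp).lintegral_prod_right'

lemma taggedDensity_withDensity (hp : Measurable (Function.uncurry p)) {χ : Ω → ℝ≥0∞}
    (hχ : Measurable χ) (z : E × (Fin n → E)) :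
    taggedDensity p (μ.withDensity χ) z = ∫⁻ ω, χ ω * (p ω z.1 * ∏ i, p ω (z.2 i)) ∂μ :=
  lintegral_withDensity_eq_lintegral_mul μ hχ
    ((measurable_taggedDensity_integrand hp).comp measurable_prodMk_left)

lemma lintegral_taggedDensity {m : Measure E} [SigmaFinite m] [SFinite μ]
    (hp : Measurable (Function.uncurry p)) (hp₁ : ∀ᵐ ω ∂μ, ∫⁻ v, p ω v ∂m = 1) :
    ∫⁻ z, taggedDensity p μ z ∂m.prod (Measure.pi fun _ : Fin n => m) = μ Set.univ := by
  rw [← lintegral_one]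
  simp only [taggedDensity]
  rw [lintegral_lintegral_swap (measurable_taggedDensity_integrand hp).aemeasurable]
  refine lintegral_congr_ae ?_
  filter_upwards [hp₁] with ω hω
  have hpω : Measurable (p ω) := hp.comp measurable_prodMk_left
  rw [lintegral_prod_mul (g := fun x : Fin n → E => ∏ i, p ω (x i)) hpω.aemeasurable
      (Finset.measurable_prod _ fun i _ => hpω.comp (measurable_pi_apply i)).aemeasurable,
    lintegral_pi_fin_prod_eq_prod fun _ => hpω]
  simp [hω]

lemma tendsto_taggedDensity_withDensity (hp : Measurable (Function.uncurry p))
    {u : ℕ → Ω → ℝ≥0∞} {χ : Ω → ℝ≥0∞} (hu : ∀ j, Measurable (u j)) (hu₁ : ∀ j ω, u j ω ≤ 1)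
    (hlim : ∀ ω, Filter.Tendsto (fun j => u j ω) Filter.atTop (nhds (χ ω)))
    {z : E × (Fin n → E)} (hz : taggedDensity p μ z ≠ ⊤) :
    Filter.Tendsto (fun j => taggedDensity p (μ.withDensity (u j)) z) Filter.atTop
      (nhds (taggedDensity p (μ.withDensity χ) z)) := by
  have hχ : Measurable χ := measurable_of_tendsto_metrizable hu (tendsto_pi_nhds.2 hlim)
  have hprod : Measurable fun ω => p ω z.1 * ∏ i, p ω (z.2 i) :=
    (measurable_taggedDensity_integrand hp).comp measurable_prodMk_left
  simp only [taggedDensity_withDensity hp hχ, taggedDensity_withDensity hp (hu _)]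
  refine tendsto_lintegral_of_dominated_convergence _ (fun j => (hu j).mul hprod)
    (fun j => .of_forall fun ω => mul_le_of_le_one_left' (hu₁ j ω)) hz ?_
  filter_upwards [ae_lt_top hprod hz] with ω hω
  exact ENNReal.Tendsto.mul_const (hlim ω) (.inr hω.ne)

lemma lintegral_taggedDensity_vecCons {m : Measure E} [SFinite m] [SFinite μ]
    (hp : Measurable (Function.uncurry p)) (v : E) (x : Fin n → E) :
    ∫⁻ y, taggedDensity p μ (v, Matrix.vecCons y x) ∂m =
      taggedDensity p (μ.withDensity fun ω => ∫⁻ y, p ω y ∂m) (v, x) := by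
  have hcons : Measurable fun y => (v, Matrix.vecCons y x) := by
    refine measurable_const.prodMk (measurable_pi_lambda _ fun i => ?_)
    cases i using Fin.cases with
    | zero => exact measurable_id
    | succ j => exact measurable_const
  have hint : Measurable fun q : E × Ω => p q.2 v * ∏ i, p q.2 (Matrix.vecCons q.1 x i) :=
    (measurable_taggedDensity_integrand hp).comp (hcons.prodMap measurable_id)
  rw [taggedDensity_withDensity hp (hp.lintegral_prod_right (f := p))]
  simp only [taggedDensity]
  rw [lintegral_lintegral_swap hint.aemeasurable]
  refine lintegral_congr fun ω => ?_
  have hpω : Measurable (p ω) := hp.comp measurable_prodMk_left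
  rw [← lintegral_mul_const _ hpω]
  refine lintegral_congr fun y => ?_
  simp [Fin.prod_univ_succ, mul_left_comm]

/-- The interaction energy of a tagged particle of weight `a` with law in the mixture over `μ` of
the product laws with one-particle densities `p ω`, in the presence of `n` other particles. -/
def mixtureEnergy (k : Measure (E × E)) (m : Measure E) (a : E → NNReal) (p : Ω → E → ℝ≥0∞) (n : ℕ)
    (μ : Measure Ω) : ℝ≥0∞ :=
  twoPointEnergy k (Measure.pi fun _ : Fin n => m) fun z => a z.1 * taggedDensity p μ z

variable {k : Measure (E × E)} {m : Measure E} {a : E → NNReal}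

lemma measurable_weight_mul_taggedDensity [SFinite μ] (ha : Measurable a)
    (hp : Measurable (Function.uncurry p)) :
    Measurable fun z : E × (Fin n → E) => a z.1 * taggedDensity p μ z :=
  (ha.comp measurable_fst).coe_nnreal_ennreal.mul (measurable_taggedDensity hp)

lemma mixtureEnergy_add_le [SFinite μ] (ha : Measurable a) (hp : Measurable (Function.uncurry p)) :
    mixtureEnergy k m a p n (μ + ν) ≤ mixtureEnergy k m a p n μ + mixtureEnergy k m a p n ν := by
  simpa only [mixtureEnergy, taggedDensity, lintegral_add_measure, mul_add, Pi.add_def] using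
    twoPointEnergy_add_le (h := fun z => a z.1 * taggedDensity p ν z)
      (measurable_weight_mul_taggedDensity (μ := μ) ha hp)

lemma mixtureEnergy_smul {c : ℝ≥0∞} (hc : c ≠ ⊤) (μ : Measure Ω) :
    mixtureEnergy k m a p n (c • μ) = c * mixtureEnergy k m a p n μ := by
  simpa only [mixtureEnergy, taggedDensity, lintegral_smul_measure, Pi.smul_def, smul_eq_mul,
    mul_left_comm] using
    twoPointEnergy_smul hc fun z : E × (Fin n → E) => a z.1 * taggedDensity p μ z

lemma mixtureEnergy_withDensity_le_liminf [SFinite k] [SigmaFinite m] (hk : k ≪ m.prod m)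
    (ha : Measurable a) (hp : Measurable (Function.uncurry p)) [IsFiniteMeasure μ]
    (hp₁ : ∀ᵐ ω ∂μ, ∫⁻ v, p ω v ∂m = 1) {u : ℕ → Ω → ℝ≥0∞} {χ : Ω → ℝ≥0∞}
    (hu : ∀ j, Measurable (u j)) (hu₁ : ∀ j ω, u j ω ≤ 1)
    (hlim : ∀ ω, Filter.Tendsto (fun j => u j ω) Filter.atTop (nhds (χ ω))) :
    mixtureEnergy k m a p n (μ.withDensity χ) ≤
      Filter.liminf (fun j => mixtureEnergy k m a p n (μ.withDensity (u j))) Filter.atTop := by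
  have hfin : ∀ᵐ z ∂m.prod (Measure.pi fun _ : Fin n => m), taggedDensity p μ z < ⊤ :=
    ae_lt_top (measurable_taggedDensity hp)
      (by rw [lintegral_taggedDensity hp hp₁]; exact measure_ne_top _ _)
  have hχ₁ (ω : Ω) : χ ω ≤ 1 := le_of_tendsto' (hlim ω) fun j => hu₁ j ω
  have hle (z : E × (Fin n → E)) : taggedDensity p (μ.withDensity χ) z ≤ taggedDensity p μ z :=
    lintegral_mono' ((withDensity_mono (.of_forall hχ₁)).trans_eq withDensity_one) le_rfl
  refine twoPointEnergy_le_liminf hk (fun j => measurable_weight_mul_taggedDensity ha hp) ?_ ?_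
  · filter_upwards [hfin] with z hz
    exact ENNReal.mul_ne_top ENNReal.coe_ne_top ((hle z).trans_lt hz).ne
  · filter_upwards [hfin] with z hz
    exact ENNReal.Tendsto.const_mul
      (tendsto_taggedDensity_withDensity hp hu hu₁ hlim hz.ne) (.inr ENNReal.coe_ne_top)

/-- Integrating out one of the other particles over `S` and over `Sᶜ` separately amounts to
splitting `μ` according to the probability that this particle lies in `S`. -/
lemma mixtureEnergy_withDensity_add_compl_le [SFinite k] [SigmaFinite m] [SFinite μ]
    (ha : Measurable a) (hp : Measurable (Function.uncurry p)) {S : Set E} (hS : MeasurableSet S) :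
    mixtureEnergy k m a p n (μ.withDensity fun ω => ∫⁻ y in S, p ω y ∂m) +
      mixtureEnergy k m a p n (μ.withDensity fun ω => ∫⁻ y in Sᶜ, p ω y ∂m) ≤
        mixtureEnergy k m a p (n + 1) μ := by
  have he := (measurePreserving_piFinSuccAbove (fun _ : Fin (n + 1) => m) 0).symm
  have hg := measurable_weight_mul_taggedDensity (μ := μ) (n := n + 1) ha hp
  have hcons (y : E) (x : Fin n → E) :
      (MeasurableEquiv.piFinSuccAbove (fun _ => E) 0).symm (y, x) = Matrix.vecCons y x :=
    Fin.insertNth_zero' y x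
  have hout (T : Set E) (z : E × (Fin n → E)) :
      a z.1 * taggedDensity p (μ.withDensity fun ω => ∫⁻ y in T, p ω y ∂m) z =
        ∫⁻ y in T, a z.1 * taggedDensity p μ (z.1, Matrix.vecCons y z.2) ∂m := by
    rw [lintegral_const_mul' _ _ ENNReal.coe_ne_top, lintegral_taggedDensity_vecCons hp]
  have hh : Measurable fun q : E × (E × (Fin n → E)) =>
      a q.1 * taggedDensity p μ (q.1, Matrix.vecCons q.2.1 q.2.2) := by
    simpa only [Function.comp_def, hcons] using
      hg.comp (measurable_fst.prodMk (he.measurable.comp measurable_snd))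
  simp only [mixtureEnergy, hout]
  refine (twoPointEnergy_setLIntegral_add_compl_le hh hS).trans_eq ?_
  simpa only [hcons] using twoPointEnergy_comp he hg

variable {π : Measure Ω} {κ : ProbabilityTheory.Kernel Ω E} [ProbabilityTheory.IsMarkovKernel κ]

lemma ae_lintegral_density_eq_one (hκ : ∀ᵐ ω ∂π, κ ω = m.withDensity (p ω)) :
    ∀ᵐ ω ∂π, ∫⁻ v, p ω v ∂m = 1 := by
  filter_upwards [hκ] with ω hω
  rw [← setLIntegral_univ, ← withDensity_apply _ .univ, ← hω, measure_univ]

lemma mixtureEnergy_withDensity_kernel_add_compl_le [SFinite k] [SigmaFinite m] [SFinite μ]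
    (ha : Measurable a) (hp : Measurable (Function.uncurry p))
    (hκ : ∀ᵐ ω ∂μ, κ ω = m.withDensity (p ω)) {S : Set E} (hS : MeasurableSet S) :
    mixtureEnergy k m a p n (μ.withDensity fun ω => κ ω S) +
      mixtureEnergy k m a p n (μ.withDensity (1 - fun ω => κ ω S)) ≤
        mixtureEnergy k m a p (n + 1) μ := by
  have hwd {T : Set E} (hT : MeasurableSet T) :
      μ.withDensity (fun ω => κ ω T) = μ.withDensity fun ω => ∫⁻ y in T, p ω y ∂m := by
    refine withDensity_congr_ae ?_
    filter_upwards [hκ] with ω hω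
    rw [hω, withDensity_apply _ hT]
  have hcompl : (1 - fun ω => κ ω S) = fun ω => κ ω Sᶜ :=
    funext fun ω => (prob_compl_eq_one_sub hS).symm
  rw [hcompl, hwd hS, hwd hS.compl]
  exact mixtureEnergy_withDensity_add_compl_le ha hp hS

lemma monotone_mixtureEnergy [SFinite k] [SigmaFinite m] [SFinite μ] (ha : Measurable a)
    (hp : Measurable (Function.uncurry p)) (hκ : ∀ᵐ ω ∂μ, κ ω = m.withDensity (p ω)) :
    Monotone fun n => mixtureEnergy k m a p n μ :=
  monotone_nat_of_le_succ fun n => by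
    have h := mixtureEnergy_withDensity_kernel_add_compl_le (k := k) (n := n) ha hp hκ .univ
    simp only [measure_univ] at h
    exact le_self_add.trans (by simpa only [← Pi.one_def, withDensity_one] using h)

/-- The limit of the nondecreasing sequence `mixtureEnergy k m a p n μ`. -/
def limitEnergy (k : Measure (E × E)) (m : Measure E) (a : E → NNReal) (p : Ω → E → ℝ≥0∞)
    (μ : Measure Ω) : ℝ≥0∞ :=
  ⨆ n, mixtureEnergy k m a p n μ

lemma isLSCSublinear_limitEnergy [SFinite k] [SigmaFinite m] (hk : k ≪ m.prod m)
    (ha : Measurable a) (hp : Measurable (Function.uncurry p))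
    (hp₁ : ∀ᵐ ω ∂π, ∫⁻ v, p ω v ∂m = 1) : IsLSCSublinear π (limitEnergy k m a p) where
  add_le μ ν _ _ := iSup_le fun n => (mixtureEnergy_add_le ha hp).trans <|
    add_le_add (le_iSup (mixtureEnergy k m a p · μ) n) (le_iSup (mixtureEnergy k m a p · ν) n)
  smul c hc μ := by simp only [limitEnergy, mixtureEnergy_smul hc, ENNReal.mul_iSup]
  withDensity_le_liminf μ _ hμ u χ hu hu₁ hlim := iSup_le fun n =>
    (mixtureEnergy_withDensity_le_liminf hk ha hp (hμ.ae_le hp₁) hu hu₁ hlim).trans <|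
      Filter.liminf_le_liminf <| .of_forall fun j =>
        le_iSup (mixtureEnergy k m a p · (μ.withDensity (u j))) n

lemma splits_limitEnergy_kernel [SFinite k] [SigmaFinite m] (ha : Measurable a)
    (hp : Measurable (Function.uncurry p)) (hκ : ∀ᵐ ω ∂π, κ ω = m.withDensity (p ω))
    {S : Set E} (hS : MeasurableSet S) :
    Splits (limitEnergy k m a p) π fun ω => κ ω S where
  measurable := κ.measurable_coe hS
  le_one _ := prob_le_one
  add_le μ _ hμ := by
    have hκμ := hμ.ae_le hκ
    have hmono (χ : Ω → ℝ≥0∞) : Monotone fun n => mixtureEnergy k m a p n (μ.withDensity χ) :=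
      monotone_mixtureEnergy ha hp ((withDensity_absolutelyContinuous μ χ).ae_le hκμ)
    rw [limitEnergy, limitEnergy, ENNReal.iSup_add_iSup_of_monotone (hmono _) (hmono _)]
    exact iSup_le fun n => (mixtureEnergy_withDensity_kernel_add_compl_le ha hp hκμ hS).trans
      (le_iSup (mixtureEnergy k m a p · μ) (n + 1))

lemma limitEnergy_add [SFinite k] [SigmaFinite m] (hk : k ≪ m.prod m) (ha : Measurable a)
    (hp : Measurable (Function.uncurry p)) (hκ : ∀ᵐ ω ∂π, κ ω = m.withDensity (p ω))
    (hΩ : ‹MeasurableSpace Ω› ≤ Measure.instMeasurableSpace.comap κ) {F G : Measure Ω}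
    [IsFiniteMeasure F] [IsFiniteMeasure G] (hF : F ≪ π) (hG : G ≪ π) :
    limitEnergy k m a p (F + G) = limitEnergy k m a p F + limitEnergy k m a p G := by
  have hJ := isLSCSublinear_limitEnergy hk ha hp (ae_lintegral_density_eq_one hκ)
  exact hJ.map_add (fun χ => Splits.of_measurable hJ fun A => Splits.indicator_of_le_comap hJ
    (fun S hS => splits_limitEnergy_kernel ha hp hκ hS) hΩ) hF hG

end MixtureEnergy

section WeakTopology

variable {E : Type*} [TopologicalSpace E] [MeasurableSpace E]

section

variable [SecondCountableTopology E]

variable (E) in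
/-- A countable subbasis of the weak topology: lower bounds on the mass of finite unions of members
of a countable basis of `E`. -/
def weakSubbasis : Set (Set (ProbabilityMeasure E)) :=
  Set.range fun x : Finset (TopologicalSpace.countableBasis E) × ℚ =>
    {ρ | ENNReal.ofReal x.2 < (ρ : Measure E) (⋃ t ∈ x.1, t)}

lemma exists_mem_weakSubbasis_of_lt {G : Set E} (hG : IsOpen G) {ρ : ProbabilityMeasure E}
    {c : ℝ≥0∞} (hc : c < (ρ : Measure E) G) :
    ∃ s ∈ weakSubbasis E, ρ ∈ s ∧ ∀ σ ∈ s, c ≤ (σ : Measure E) G := by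
  obtain ⟨q, -, hcq, hqρ⟩ := ENNReal.lt_iff_exists_rat_btwn.1 hc
  have hqρ' : Real.toNNReal q < ρ G := by
    rwa [← ENNReal.coe_lt_coe, ProbabilityMeasure.ennreal_coeFn_eq_coeFn_toMeasure]
  obtain ⟨T, hT, hlt, hTG⟩ := ρ.exists_lt_measure_biUnion_of_isOpen
    (S := TopologicalSpace.countableBasis E)
    (fun u hu x hx => by
      obtain ⟨s, hs, hxs, hsu⟩ :=
        (TopologicalSpace.isBasis_countableBasis E).exists_subset_of_mem_open hx hu
      exact ⟨s, hs, (TopologicalSpace.isOpen_of_mem_countableBasis hs).mem_nhds hxs, hsu⟩) hG hqρ'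
  lift T to Finset (TopologicalSpace.countableBasis E) using hT
  rw [Finset.set_biUnion_finset_image] at hlt hTG
  refine ⟨_, ⟨(T, q), rfl⟩, ?_, fun σ hσ => hcq.le.trans (hσ.le.trans (measure_mono hTG))⟩
  rwa [← ENNReal.coe_lt_coe, ProbabilityMeasure.ennreal_coeFn_eq_coeFn_toMeasure] at hlt

end

variable [BorelSpace E] [HasOuterApproxClosed E]

lemma lowerSemicontinuous_probabilityMeasure_apply {G : Set E} (hG : IsOpen G) :
    LowerSemicontinuous fun ρ : ProbabilityMeasure E => (ρ : Measure E) G :=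
  lowerSemicontinuous_iff_le_liminf.2 fun _ =>
    ProbabilityMeasure.le_liminf_measure_open_of_tendsto Filter.tendsto_id hG

lemma isOpen_setOf_lt_probabilityMeasure_apply {G : Set E} (hG : IsOpen G) (q : ℝ≥0∞) :
    IsOpen {ρ : ProbabilityMeasure E | q < (ρ : Measure E) G} :=
  (lowerSemicontinuous_probabilityMeasure_apply hG).isOpen_preimage q

lemma measurable_probabilityMeasure_coe :
    Measurable fun ρ : ProbabilityMeasure E => (ρ : Measure E) := by
  have : BorelSpace (ProbabilityMeasure E) := ⟨rfl⟩
  exact Measurable.measure_of_isPiSystem_of_isProbabilityMeasure BorelSpace.measurable_eq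
    isPiSystem_isOpen fun G hG => (lowerSemicontinuous_probabilityMeasure_apply hG).measurable

variable [SecondCountableTopology E]

lemma eq_generateFrom_weakSubbasis :
    (inferInstance : TopologicalSpace (ProbabilityMeasure E)) =
      TopologicalSpace.generateFrom (weakSubbasis E) := by
  refine le_antisymm (le_generateFrom ?_) (le_of_nhds_le_nhds fun ρ => ?_)
  · rintro _ ⟨x, rfl⟩
    exact isOpen_setOf_lt_probabilityMeasure_apply
      (isOpen_biUnion fun t _ => TopologicalSpace.isOpen_of_mem_countableBasis t.2) _
  · have hcount : @SecondCountableTopology _ (TopologicalSpace.generateFrom (weakSubbasis E)) :=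
      @SecondCountableTopology.mk _ (_) ⟨weakSubbasis E, Set.countable_range _, rfl⟩
    have : (@nhds _ (TopologicalSpace.generateFrom (weakSubbasis E)) ρ).IsCountablyGenerated :=
      @FirstCountableTopology.nhds_generated_countable _ (_)
        (@TopologicalSpace.SecondCountableTopology.to_firstCountableTopology _ (_) hcount) ρ
    refine tendsto_of_forall_isOpen_le_liminf' (μs := id) fun G hG =>
      le_of_forall_lt_imp_le_of_dense fun c hc => ?_
    obtain ⟨s, hs, hρs, hsG⟩ := exists_mem_weakSubbasis_of_lt hG hc
    refine Filter.le_liminf_of_le (by isBoundedDefault) (Filter.mem_of_superset ?_ hsG)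
    exact @IsOpen.mem_nhds _ (_) _ _ (TopologicalSpace.isOpen_generateFrom_of_mem hs) hρs

lemma borel_probabilityMeasure_le_comap_coe :
    borel (ProbabilityMeasure E) ≤
      Measure.instMeasurableSpace.comap fun ρ : ProbabilityMeasure E => (ρ : Measure E) := by
  have : SecondCountableTopology (ProbabilityMeasure E) :=
    ⟨weakSubbasis E, Set.countable_range _, eq_generateFrom_weakSubbasis⟩
  rw [borel_eq_generateFrom_of_subbasis eq_generateFrom_weakSubbasis]
  refine MeasurableSpace.generateFrom_le ?_
  rintro _ ⟨x, rfl⟩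
  have hopen : IsOpen (⋃ t ∈ x.1, (t : Set E)) :=
    isOpen_biUnion fun t _ => TopologicalSpace.isOpen_of_mem_countableBasis t.2
  exact ⟨{μ | ENNReal.ofReal x.2 < μ (⋃ t ∈ x.1, t)},
    measurableSet_lt measurable_const (Measure.measurable_coe hopen.measurableSet), rfl⟩

end WeakTopology

section DensityKernel

open ProbabilityTheory

variable {Ω E : Type*} [MeasurableSpace Ω] [MeasurableSpace E]
  [MeasurableSpace.CountableOrCountablyGenerated Ω E]

lemma exists_measurable_density (κ : Kernel Ω E) [IsFiniteKernel κ] (m : Measure E)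
    [SigmaFinite m] :
    ∃ p : Ω → E → ℝ≥0∞, Measurable (Function.uncurry p) ∧
      ∀ ω, κ ω ≪ m → κ ω = m.withDensity (p ω) := by
  let h := m.toFinite.rnDeriv m
  let η : Kernel Ω E := Kernel.const Ω m.toFinite
  have hh : Measurable h := Measure.measurable_rnDeriv _ _
  have hη (ω : Ω) : η ω = m.withDensity h :=
    (Measure.withDensity_rnDeriv_eq _ _ (toFinite_absolutelyContinuous m)).symm
  refine ⟨fun ω v => h v * Kernel.rnDeriv κ η ω v,
    (hh.comp measurable_snd).mul (Kernel.measurable_rnDeriv κ η), fun ω hω => ?_⟩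
  calc κ ω = (η ω).withDensity (Kernel.rnDeriv κ η ω) := by
        rw [← Kernel.withDensity_apply _ (Kernel.measurable_rnDeriv κ η),
          Kernel.withDensity_rnDeriv_eq (hω.trans (absolutelyContinuous_toFinite m))]
    _ = m.withDensity fun v => h v * Kernel.rnDeriv κ η ω v := by
        rw [hη, ← withDensity_mul _ hh (Kernel.measurable_rnDeriv_right κ η ω)]
        rfl

end DensityKernel

section BindPi

open ProbabilityTheory

variable {Ω E : Type*} [MeasurableSpace Ω] [MeasurableSpace E]

lemma measurable_measure_pi_kernel {ι : Type*} [Fintype ι] (κ : Kernel Ω E) [IsMarkovKernel κ] :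
    Measurable fun ω => Measure.pi fun _ : ι => κ ω := by
  refine Measurable.measure_of_isPiSystem_of_isProbabilityMeasure generateFrom_pi.symm
    isPiSystem_pi ?_
  rintro _ ⟨t, ht, rfl⟩
  simp only [Measure.pi_pi]
  exact Finset.measurable_prod _ fun i _ => κ.measurable_coe (ht i (Set.mem_univ i))

lemma isFiniteMeasure_bind_pi_kernel {ι : Type*} [Fintype ι] (κ : Kernel Ω E) [IsMarkovKernel κ]
    (μ : Measure Ω) [IsFiniteMeasure μ] :
    IsFiniteMeasure (μ.bind fun ω => Measure.pi fun _ : ι => κ ω) := by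
  constructor
  simp [Measure.bind_apply .univ (measurable_measure_pi_kernel κ).aemeasurable]

variable {n : ℕ} {p : Ω → E → ℝ≥0∞}

lemma measurable_prod_density (hp : Measurable (Function.uncurry p)) :
    Measurable fun q : (Fin n → E) × Ω => ∏ i, p q.2 (q.1 i) :=
  Finset.measurable_prod _ fun i _ =>
    hp.comp (f := fun q : (Fin n → E) × Ω => (q.2, q.1 i)) (by fun_prop)

lemma bind_pi_eq_withDensity {m : Measure E} [SigmaFinite m] {μ : Measure Ω} [SFinite μ]
    {κ : Kernel Ω E} [IsMarkovKernel κ]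
    (hp : Measurable (Function.uncurry p)) (hκ : ∀ᵐ ω ∂μ, κ ω = m.withDensity (p ω)) :
    μ.bind (fun ω => Measure.pi fun _ : Fin n => κ ω) =
      (Measure.pi fun _ => m).withDensity fun x => ∫⁻ ω, ∏ i, p ω (x i) ∂μ := by
  ext s hs
  rw [Measure.bind_apply hs (measurable_measure_pi_kernel κ).aemeasurable, withDensity_apply _ hs,
    lintegral_lintegral_swap (measurable_prod_density hp).aemeasurable]
  refine lintegral_congr_ae ?_
  filter_upwards [hκ] with ω hω
  have : SigmaFinite (m.withDensity (p ω)) := hω ▸ inferInstance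
  have hpω : Measurable (p ω) := hp.comp measurable_prodMk_left
  rw [hω, pi_fin_withDensity hpω, withDensity_apply _ hs]

end BindPi

section FisherInformation

variable {d n : ℕ} {ν γ : ℝ}

/-- The singular interaction `|v - w|^{-(d+ν)} dv dw`. -/
def fracKernel (d : ℕ) (ν : ℝ) : Measure (Euc d × Euc d) :=
  (volume.prod volume).withDensity fun q => ENNReal.ofReal (‖q.1 - q.2‖ ^ ((d : ℝ) + ν))⁻¹

lemma fracKernel_absolutelyContinuous (d : ℕ) (ν : ℝ) : fracKernel d ν ≪ volume.prod volume :=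
  withDensity_absolutelyContinuous _ _

instance (d : ℕ) (ν : ℝ) : SFinite (fracKernel d ν) :=
  inferInstanceAs (SFinite ((volume.prod volume).withDensity _))

/-- The weight `⟨v⟩^γ`. -/
def japWeight (γ : ℝ) (v : Euc d) : NNReal := Real.toNNReal (jap v ^ γ)

lemma measurable_japWeight : Measurable (japWeight γ : Euc d → NNReal) := by
  unfold japWeight jap
  fun_prop

lemma hellingerSq_japWeight_mul (v w : Euc d) {x y : ℝ} (hx : 0 ≤ x) (hy : 0 ≤ y) :
    hellingerSq (japWeight γ v * ENNReal.ofReal x) (japWeight γ w * ENNReal.ofReal y) =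
      ENNReal.ofReal ((jap v ^ (γ / 2) * √x - jap w ^ (γ / 2) * √y) ^ 2) := by
  have hjap (u : Euc d) : 0 ≤ jap u := Real.sqrt_nonneg _
  have hmul (u : Euc d) (t : ℝ) :
      (japWeight γ u : ℝ≥0∞) * ENNReal.ofReal t = ENNReal.ofReal (jap u ^ γ * t) :=
    (ENNReal.ofReal_mul (Real.rpow_nonneg (hjap u) γ)).symm
  have hsqrt (u : Euc d) (t : ℝ) : √(jap u ^ γ * t) = jap u ^ (γ / 2) * √t := by
    rw [Real.sqrt_mul (Real.rpow_nonneg (hjap u) γ), Real.sqrt_eq_rpow (jap u ^ γ),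
      ← Real.rpow_mul (hjap u), mul_one_div]
  rw [hmul, hmul, hellingerSq_ofReal (mul_nonneg (Real.rpow_nonneg (hjap v) γ) hx)
    (mul_nonneg (Real.rpow_nonneg (hjap w) γ) hy), hsqrt, hsqrt]

lemma lintegral_fisherInfo_integrand_eq_twoPointEnergy (ν γ : ℝ) {G : (Fin (n + 1) → Euc d) → ℝ}
    (hG : Measurable G) (hG₀ : ∀ V, 0 ≤ G V) (i : Fin (n + 1)) :
    ∫⁻ V : Fin (n + 1) → Euc d, ∫⁻ w : Euc d,
      ENNReal.ofReal ((jap (V i) ^ (γ / 2) * √(G V)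
        - jap w ^ (γ / 2) * √(G (Function.update V i w))) ^ 2 / ‖V i - w‖ ^ ((d : ℝ) + ν)) =
      twoPointEnergy (fracKernel d ν) volume
        fun z => japWeight γ z.1 * ENNReal.ofReal (G (i.insertNth z.1 z.2)) := by
  let e := (MeasurableEquiv.piFinSuccAbove (fun _ : Fin (n + 1) => Euc d) i).symm
  have he : MeasurePreserving e (volume.prod volume) volume :=
    (volume_preserving_piFinSuccAbove (fun _ : Fin (n + 1) => Euc d) i).symm
  have hinsert (v : Euc d) (x : Fin n → Euc d) : e (v, x) = i.insertNth v x := rfl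
  have hg : Measurable fun z : Euc d × (Fin n → Euc d) =>
      (japWeight γ z.1 : ℝ≥0∞) * ENNReal.ofReal (G (i.insertNth z.1 z.2)) :=
    (measurable_japWeight.comp measurable_fst).coe_nnreal_ennreal.mul
      (hG.comp he.measurable).ennreal_ofReal
  rw [fracKernel, twoPointEnergy_withDensity_prod (by fun_prop) hg,
    ← he.lintegral_comp_emb e.measurableEmbedding]
  refine lintegral_congr fun z => lintegral_congr fun w => ?_
  rw [hellingerSq_japWeight_mul _ _ (hG₀ _) (hG₀ _), ← ENNReal.ofReal_mul' (sq_nonneg _),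
    hinsert z.1 z.2, Fin.insertNth_apply_same, Fin.update_insertNth, div_eq_inv_mul]

lemma fisherInfo_eq_twoPointEnergy (ν γ : ℝ) {G : (Fin (n + 1) → Euc d) → ℝ}
    (hG : Measurable G) (hG₀ : ∀ V, 0 ≤ G V) {g : Euc d × (Fin n → Euc d) → ℝ≥0∞}
    (hg : ∀ i : Fin (n + 1), (fun z : Euc d × (Fin n → Euc d) =>
      ENNReal.ofReal (G (i.insertNth z.1 z.2))) =ᵐ[volume.prod volume] g) :
    fisherInfo d (n + 1) ν γ G =
      twoPointEnergy (fracKernel d ν) volume fun z => japWeight γ z.1 * g z := by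
  have hterm (i : Fin (n + 1)) :=
    (lintegral_fisherInfo_integrand_eq_twoPointEnergy ν γ hG hG₀ i).trans
      (twoPointEnergy_congr_ae (fracKernel_absolutelyContinuous d ν)
        ((hg i).mono fun z hz => congrArg ((japWeight γ z.1 : ℝ≥0∞) * ·) hz))
  simp only [fisherInfo, hterm, Finset.sum_const, Finset.card_univ, Fintype.card_fin, nsmul_eq_mul]
  rw [← mul_assoc, ENNReal.inv_mul_cancel (by simp) (by simp), one_mul]

open ProbabilityTheory

variable {Ω : Type*} [MeasurableSpace Ω] {p : Ω → Euc d → ℝ≥0∞} {μ : Measure Ω} [IsFiniteMeasure μ]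
  {κ : Kernel Ω (Euc d)} [IsMarkovKernel κ]

lemma fisherInfoM_bind_pi_eq_mixtureEnergy (ν γ : ℝ) (hp : Measurable (Function.uncurry p))
    (hκ : ∀ᵐ ω ∂μ, κ ω = volume.withDensity (p ω)) :
    fisherInfoM d (n + 1) ν γ (μ.bind fun ω => Measure.pi fun _ => κ ω) =
      mixtureEnergy (fracKernel d ν) volume (japWeight γ) p n μ := by
  let P := μ.bind fun ω => Measure.pi fun _ : Fin (n + 1) => κ ω
  have : IsFiniteMeasure P := isFiniteMeasure_bind_pi_kernel κ μ
  have hdensity : ∀ᵐ V, ENNReal.ofReal (P.rnDeriv volume V).toReal =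
      ∫⁻ ω, ∏ i, p ω (V i) ∂μ := by
    have hrn := Measure.rnDeriv_withDensity (volume : Measure (Fin (n + 1) → Euc d))
      ((measurable_prod_density (n := n + 1) hp).lintegral_prod_right' (ν := μ))
    filter_upwards [hrn, Measure.rnDeriv_lt_top P volume] with V hV hVtop
    rw [ENNReal.ofReal_toReal hVtop.ne, ← hV, volume_pi, ← bind_pi_eq_withDensity hp hκ]
  refine fisherInfo_eq_twoPointEnergy ν γ (Measure.measurable_rnDeriv _ _).ennreal_toReal
    (fun _ => ENNReal.toReal_nonneg) fun i => ?_
  have hmp := (volume_preserving_piFinSuccAbove (fun _ : Fin (n + 1) => Euc d) i).symm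
  filter_upwards [hmp.quasiMeasurePreserving.ae hdensity] with z hz
  refine hz.trans (lintegral_congr fun ω => ?_)
  rw [Fin.prod_univ_succAbove _ i]
  simp [MeasurableEquiv.piFinSuccAbove_symm_apply]

lemma limsup_fisherInfoM_bind_pi_eq_limitEnergy (ν γ : ℝ) (hp : Measurable (Function.uncurry p))
    (hκ : ∀ᵐ ω ∂μ, κ ω = volume.withDensity (p ω)) :
    Filter.limsup (fun n => fisherInfoM d n ν γ (μ.bind fun ω => Measure.pi fun _ => κ ω))
      Filter.atTop = limitEnergy (fracKernel d ν) volume (japWeight γ) p μ := by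
  rw [← Filter.limsup_nat_add _ 1]
  simp only [fisherInfoM_bind_pi_eq_mixtureEnergy ν γ hp hκ]
  exact (tendsto_atTop_iSup (monotone_mixtureEnergy measurable_japWeight hp hκ)).limsup_eq

end FisherInformation

section Affinity

open ProbabilityTheory

/-- The tautological Markov kernel from the space of probability measures on `ℝ^d` to `ℝ^d`. -/
def evalKernel (d : ℕ) : Kernel (ProbabilityMeasure (Euc d)) (Euc d) :=
  ⟨fun ρ => ρ, measurable_probabilityMeasure_coe⟩

instance (d : ℕ) : IsMarkovKernel (evalKernel d) := ⟨fun ρ => ρ.2⟩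

lemma meanFisher_eq_limitEnergy {d : ℕ} (ν γ : ℝ) {μ : Measure (ProbabilityMeasure (Euc d))}
    [IsFiniteMeasure μ] {p : ProbabilityMeasure (Euc d) → Euc d → ℝ≥0∞}
    (hp : Measurable (Function.uncurry p))
    (hμ : ∀ᵐ ρ ∂μ, evalKernel d ρ = volume.withDensity (p ρ)) :
    meanFisher d ν γ μ = limitEnergy (fracKernel d ν) volume (japWeight γ) p μ := by
  have hmixture (n : ℕ) : mixture d μ n = μ.bind fun ρ => Measure.pi fun _ => evalKernel d ρ := rfl
  simp only [meanFisher, hmixture]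
  exact limsup_fisherInfoM_bind_pi_eq_limitEnergy ν γ hp hμ

theorem stmt_14_general (d : ℕ) (ν γ : ℝ) (F G : Measure (ProbabilityMeasure (Euc d)))
    [IsFiniteMeasure F] [IsFiniteMeasure G]
    (hF : ∀ᵐ ρ : ProbabilityMeasure (Euc d) ∂F, (ρ : Measure (Euc d)) ≪ volume)
    (hG : ∀ᵐ ρ : ProbabilityMeasure (Euc d) ∂G, (ρ : Measure (Euc d)) ≪ volume)
    {s t : ℝ≥0∞} (hs : s ≠ ⊤) (ht : t ≠ ⊤) :
    meanFisher d ν γ (s • F + t • G) = s * meanFisher d ν γ F + t * meanFisher d ν γ G := by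
  obtain ⟨p, hp, hac⟩ := exists_measurable_density (evalKernel d) volume
  have := F.smul_finite hs
  have := G.smul_finite ht
  have hFG : ∀ᵐ ρ ∂(F + G), evalKernel d ρ = volume.withDensity (p ρ) :=
    ae_add_measure_iff.2 ⟨hF.mono hac, hG.mono hac⟩
  have hsF : s • F ≪ F + G := Measure.smul_absolutelyContinuous.add_right G
  have htG : t • G ≪ F + G := Measure.smul_absolutelyContinuous.add_right' F
  have hk := fracKernel_absolutelyContinuous d ν
  have hadd := limitEnergy_add hk (measurable_japWeight (γ := γ)) hp hFG
    borel_probabilityMeasure_le_comap_coe hsF htG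
  have hsmul := (isLSCSublinear_limitEnergy hk (measurable_japWeight (γ := γ)) hp
    (ae_lintegral_density_eq_one hFG)).smul
  rw [meanFisher_eq_limitEnergy ν γ hp (hF.mono hac),
    meanFisher_eq_limitEnergy ν γ hp (hG.mono hac),
    meanFisher_eq_limitEnergy ν γ hp (ae_add_measure_iff.2 ⟨hsF.ae_le hFG, htG.ae_le hFG⟩), hadd,
    hsmul s hs, hsmul t ht]

end Affinity

/-- affinity of the mean fractional Fisher information along the
decomposition of `π` into its conditionals on a `W₁`-ball `B` and on its complement:
`Ĩ_{ν,γ}(θF + (1-θ)G) = θ Ĩ_{ν,γ}(F) + (1-θ) Ĩ_{ν,γ}(G)`. -/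
theorem stmt_14 (d : ℕ) (hd : 1 ≤ d) (ν γ : ℝ)
    (hν : ν ∈ Set.Ioo (0 : ℝ) 2) (hγ : γ ≤ 0)
    (π : Measure (ProbabilityMeasure (Euc d))) (hπ : IsProbabilityMeasure π)
    (hac : ∀ᵐ (ρ : ProbabilityMeasure (Euc d)) ∂π, (ρ : Measure (Euc d)) ≪ (volume : Measure (Euc d)))
    (κ : ℝ) (hκ : 1 ≤ κ)
    (hmom : (∫⁻ ρ : ProbabilityMeasure (Euc d), (∫⁻ v, ENNReal.ofReal (jap v ^ κ) ∂(ρ : Measure (Euc d))) ∂π) < ⊤)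
    (f₀ : Measure (Euc d)) (hf₀ : IsProbabilityMeasure f₀)
    (hf₀m : (∫⁻ v, ENNReal.ofReal (jap v ^ κ) ∂f₀) < ⊤)
    (r : ℝ) (hr : 0 < r)
    (B : Set (ProbabilityMeasure (Euc d)))
    (hB : B = {ρ : ProbabilityMeasure (Euc d) | W1 (ρ : Measure (Euc d)) f₀ < r})
    (hBpos : 0 < π B) (hBlt : π B < 1)
    (F G : Measure (ProbabilityMeasure (Euc d)))
    (hF : F = (π B)⁻¹ • π.restrict B) (hG : G = (π Bᶜ)⁻¹ • π.restrict Bᶜ)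
    (θ : ℝ) (hθ : θ ∈ Set.Ioo (0 : ℝ) 1) :
    meanFisher d ν γ (ENNReal.ofReal θ • F + ENNReal.ofReal (1-θ) • G)
      = ENNReal.ofReal θ * meanFisher d ν γ F
        + ENNReal.ofReal (1-θ) * meanFisher d ν γ G := by
  have hBc : π Bᶜ ≠ 0 := fun h => hBlt.ne ((measure_of_measure_compl_eq_zero h).trans measure_univ)
  have : IsFiniteMeasure F := hF ▸ Measure.smul_finite _ (ENNReal.inv_ne_top.2 hBpos.ne')
  have : IsFiniteMeasure G := hG ▸ Measure.smul_finite _ (ENNReal.inv_ne_top.2 hBc)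
  have hFπ : F ≪ π := hF ▸ Measure.absolutelyContinuous_restrict.smul_left _
  have hGπ : G ≪ π := hG ▸ Measure.absolutelyContinuous_restrict.smul_left _
  exact stmt_14_general d ν γ F G (hFπ.ae_le hac) (hGπ.ae_le hac) ofReal_ne_top ofReal_ne_top

end
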